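/- Suppose there exist a positive definite symmetric bilinear form (·,·) on g with (g_p, g_q) = 0 whenever p ≠ q, and a linear map τ : k → g with τ(k_p) ⊆ g_{−p} for all p ≥ 0, such that ([A, x], y) = (x, [τ(A), y]) for all x, y ∈ g and all A ∈ k. Then there exists a linear subspace N ⊆ C²₊(m, g) that is invariant under the k-action, is spanned by weight-homogeneous elements, and satisfies C²₊(m, g) = N ⊕ ∂(C¹₊(m, g)) (internal direct sum). -/

import Mathlib

noncomputable section

open scoped BigOperators

variable {L : Type} [LieRing L] [LieAlgebra ℝ L]

/-- The bracket of `m`, computed in `L` and mapped back into `m` using the projection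
`π_m : L → m` (since `m` is closed under the bracket, this does not change the value). -/
def mBr7 (m : Submodule ℝ L) (πm : L →ₗ[ℝ] L) (hπ : ∀ z, πm z ∈ m) (x y : ↥m) : ↥m :=
  ⟨πm ⁅(x : L), (y : L)⁆, hπ _⟩

/-- `ψ : m → L` is ℝ-linear, i.e. an element of `C¹(m,g)`. -/
def IsLin7 (m : Submodule ℝ L) (ψ : ↥m → L) : Prop :=
  (∀ x y, ψ (x + y) = ψ x + ψ y) ∧ ∀ (c : ℝ) (x), ψ (c • x) = c • ψ x

/-- `ψ : m × m → L` is alternating ℝ-bilinear, i.e. an element of `C²(m,g)`. -/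
def IsAlt7 (m : Submodule ℝ L) (ψ : ↥m → ↥m → L) : Prop :=
  (∀ y, IsLin7 m (fun x => ψ x y)) ∧ (∀ x, IsLin7 m (ψ x)) ∧ ∀ x, ψ x x = 0

/-- The coboundary `∂ : C¹(m,g) → C²(m,g)`, `(∂φ)(x,y) = [x, φ y] - [y, φ x] + φ [x,y]`. -/
def cobound7 (m : Submodule ℝ L) (πm : L →ₗ[ℝ] L) (hπ : ∀ z, πm z ∈ m)
    (φ : ↥m → L) : ↥m → ↥m → L :=
  fun x y => ⁅(x : L), φ y⁆ - ⁅(y : L), φ x⁆ + φ (mBr7 m πm hπ x y)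

/-- A 1-cochain is homogeneous of weight `w` if `ψ(g_p) ⊆ g_{p+w}` for all `p < 0`. -/
def Homog17 (g : ℤ → Submodule ℝ L) (m : Submodule ℝ L) (w : ℤ) (ψ : ↥m → L) : Prop :=
  ∀ p : ℤ, p < 0 → ∀ x : ↥m, (x : L) ∈ g p → ψ x ∈ g (p + w)

/-- A 2-cochain is homogeneous of weight `w` if `ψ(g_p × g_q) ⊆ g_{p+q+w}` for `p,q < 0`. -/
def Homog27 (g : ℤ → Submodule ℝ L) (m : Submodule ℝ L) (w : ℤ) (ψ : ↥m → ↥m → L) : Prop :=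
  ∀ p q : ℤ, p < 0 → q < 0 → ∀ x y : ↥m,
    (x : L) ∈ g p → (y : L) ∈ g q → ψ x y ∈ g (p + q + w)

/-- `C¹₊(m,g)`: the span of the homogeneous 1-cochains of positive weight. -/
def C1plus7 (g : ℤ → Submodule ℝ L) (m : Submodule ℝ L) : Submodule ℝ (↥m → L) :=
  Submodule.span ℝ {ψ | IsLin7 m ψ ∧ ∃ w : ℤ, 0 < w ∧ Homog17 g m w ψ}

/-- `C²₊(m,g)`: the span of the homogeneous alternating 2-cochains of positive weight. -/
def C2plus7 (g : ℤ → Submodule ℝ L) (m : Submodule ℝ L) : Submodule ℝ (↥m → ↥m → L) :=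
  Submodule.span ℝ {ψ | IsAlt7 m ψ ∧ ∃ w : ℤ, 0 < w ∧ Homog27 g m w ψ}

/-- The image `∂(C¹₊(m,g)) ⊆ C²(m,g)`. -/
def imDel7 (g : ℤ → Submodule ℝ L) (m : Submodule ℝ L) (πm : L →ₗ[ℝ] L)
    (hπ : ∀ z, πm z ∈ m) : Submodule ℝ (↥m → ↥m → L) :=
  Submodule.span ℝ (cobound7 m πm hπ '' {φ | φ ∈ C1plus7 g m})

/-- The action of `A ∈ g⁰` on 2-cochains:
`(A·ψ)(x,y) = [A, ψ x y] - ψ(π_m [A, x]) y - ψ x (π_m [A, y])`. -/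
def act27 (m : Submodule ℝ L) (πm : L →ₗ[ℝ] L) (hπ : ∀ z, πm z ∈ m) (A : L)
    (ψ : ↥m → ↥m → L) : ↥m → ↥m → L :=
  fun x y => ⁅A, ψ x y⁆ - ψ ⟨πm ⁅A, (x : L)⁆, hπ _⟩ y - ψ x ⟨πm ⁅A, (y : L)⁆, hπ _⟩

/-!
A homogeneous Parseval frame of `m` extends the inner product of `g` to 2-cochains, and `N` is the
orthogonal complement of `∂(C¹₊)` in `C²₊`. For this form the adjoint of the action of `A ∈ k_p` is
the action of `τ(A)`: it commutes with `∂`, because `τ(A)` has degree `-p ≤ 0` and hence normalizes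
`m`. It may lower the weight of a cochain to a non-positive one, but `∂φ` with `φ` of such a weight
is orthogonal to `C²₊` as well, because distinct weights are orthogonal. Hence `N` is invariant;
orthogonality of distinct weights also makes it graded.
-/

universe u

section ParsevalFrame

variable {R V : Type*} {ι : Type u}

/-- A finite family `f` is a Parseval frame for the bilinear form `B` if every vector `x` is
recovered from its coefficients `B x (f i)`. A frame for a positive definite form need not be a
basis, but it computes traces like an orthonormal basis. -/
def IsParsevalFrame [CommSemiring R] [AddCommMonoid V] [Module R V] [Fintype ι]
    (B : LinearMap.BilinForm R V) (f : ι → V) : Prop :=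
  ∀ x, ∑ i, B x (f i) • f i = x

theorem IsParsevalFrame.sum_apply_eq_of_isAdjointPair [CommSemiring R] [AddCommMonoid V]
    [Module R V] [Fintype ι] {B : LinearMap.BilinForm R V} (hB : B.IsSymm) {f : ι → V}
    (hf : IsParsevalFrame B f) {T T' : V → V} (hT : LinearMap.IsAdjointPair B B T T')
    (G : LinearMap.BilinForm R V) :
    ∑ i, G (T (f i)) (f i) = ∑ i, G (f i) (T' (f i)) :=
  calc ∑ i, G (T (f i)) (f i)
    _ = ∑ i, ∑ j, B (T (f i)) (f j) * G (f j) (f i) := by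
        refine Finset.sum_congr rfl fun i _ => ?_
        conv_lhs => rw [← hf (T (f i))]
        simp only [map_sum, LinearMap.sum_apply, map_smul, LinearMap.smul_apply, smul_eq_mul]
    _ = ∑ j, ∑ i, B (T' (f j)) (f i) * G (f j) (f i) := by
        rw [Finset.sum_comm]
        simp only [hT _ _, hB.eq (T' _)]
    _ = ∑ j, G (f j) (T' (f j)) := by
        refine Finset.sum_congr rfl fun j _ => ?_
        conv_rhs => rw [← hf (T' (f j))]
        simp only [map_sum, map_smul, smul_eq_mul]

theorem IsParsevalFrame.linearMap_ext [CommSemiring R] [AddCommMonoid V] [Module R V] [Fintype ι]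
    {M : Type*} [AddCommMonoid M] [Module R M] {B : LinearMap.BilinForm R V} {f : ι → V}
    (hf : IsParsevalFrame B f) {T T' : V →ₗ[R] M} (hT : ∀ i, T (f i) = T' (f i)) : T = T' := by
  ext x
  rw [← hf x]
  simp only [map_sum, map_smul, hT]

variable [AddCommGroup V] [Module ℝ V] [FiniteDimensional ℝ V] {B : LinearMap.BilinForm ℝ V}

theorem exists_isParsevalFrame (hB : B.IsSymm) (hBpos : ∀ x, x ≠ 0 → 0 < B x x) :
    ∃ f : Fin (Module.finrank ℝ V) → V, IsParsevalFrame B f := by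
  have hnonneg : ∀ x, 0 ≤ B x x := fun x => by
    rcases eq_or_ne x 0 with rfl | hx
    · simp
    · exact (hBpos x hx).le
  let core : InnerProductSpace.Core ℝ V :=
    { inner := fun x y => B x y
      conj_inner_symm := fun x y => hB.eq y x
      re_inner_nonneg := hnonneg
      add_left := fun x y z => LinearMap.BilinForm.add_left x y z
      smul_left := fun x y r => LinearMap.BilinForm.smul_left r x y
      definite := fun x => not_imp_not.mp fun hx => (hBpos x hx).ne' }
  let _ := core.toNormedAddCommGroup
  let _ := InnerProductSpace.ofCore core.toCore
  refine ⟨stdOrthonormalBasis ℝ V, fun x => ?_⟩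
  simp only [hB.eq x]
  exact (stdOrthonormalBasis ℝ V).sum_repr' x

theorem exists_isParsevalFrame_restrict_iSup (hB : B.IsSymm) (hBpos : ∀ x, x ≠ 0 → 0 < B x x)
    {W : ι → Submodule ℝ V} (hW : {p | W p ≠ ⊥}.Finite)
    (hBorth : ∀ p q, p ≠ q → ∀ x ∈ W p, ∀ y ∈ W q, B x y = 0) :
    ∃ (κ : Type u) (_ : Fintype κ) (f : κ → ↥(⨆ p, W p)) (d : κ → ι),
      IsParsevalFrame (B.restrict (⨆ p, W p)) f ∧ ∀ i, (f i : V) ∈ W (d i) := by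
  have hframe : ∀ p, ∃ f : Fin (Module.finrank ℝ (W p)) → W p,
      IsParsevalFrame (B.restrict (W p)) f := fun p =>
    exists_isParsevalFrame ⟨fun x y => hB.eq x y⟩ fun x hx => hBpos x (by simpa using hx)
  choose f hf using hframe
  refine ⟨Σ p : hW.toFinset, Fin (Module.finrank ℝ (W p)), inferInstance,
    fun i => ⟨f i.1 i.2, Submodule.mem_iSup_of_mem _ (f i.1 i.2).2⟩, fun i => i.1, ?_,
    fun i => (f i.1 i.2).2⟩
  let S : V →ₗ[ℝ] V :=
    ∑ i : Σ p : hW.toFinset, Fin (Module.finrank ℝ (W p)),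
      (LinearMap.flip B (f i.1 i.2)).smulRight (f i.1 i.2 : V)
  have hS : ∀ x, S x = ∑ p : hW.toFinset, ∑ i, B x (f p i) • (f p i : V) := fun x => by
    simp only [S, Fintype.sum_sigma, LinearMap.sum_apply, LinearMap.smulRight_apply,
      LinearMap.flip_apply]
  have hSid : ∀ p, ∀ x ∈ W p, S x = x := fun p x hx => by
    rcases eq_or_ne x 0 with rfl | hx0
    · exact map_zero S
    have hp : p ∈ hW.toFinset := hW.mem_toFinset.mpr (Submodule.ne_bot_iff _ |>.mpr ⟨x, hx, hx0⟩)
    rw [hS, Finset.sum_eq_single ⟨p, hp⟩]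
    · simpa using! congrArg (W p).subtype (hf p ⟨x, hx⟩)
    · refine fun q _ hq => Finset.sum_eq_zero fun i _ => ?_
      rw [hBorth p q (fun h => hq (Subtype.ext h.symm)) x hx _ (f q i).2, zero_smul]
    · exact fun h => absurd (Finset.mem_univ _) h
  have hle : ⨆ p, W p ≤ LinearMap.eqLocus S LinearMap.id := iSup_le hSid
  refine fun x => Subtype.ext (Eq.trans ?_ (hle x.2))
  simp [S, LinearMap.sum_apply]

end ParsevalFrame

section Orthogonal

variable {R K E ι : Type*} [AddCommGroup E]

theorem isCompl_orthogonal_of_anisotropic [Field K] [Module K E]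
    {b : LinearMap.BilinForm K E} (hb : b.IsRefl) {I : Submodule K E} [FiniteDimensional K I]
    (hI : ∀ x ∈ I, b x x = 0 → x = 0) : IsCompl I (b.orthogonal I) := by
  have hdisj : Disjoint I (b.orthogonal I) :=
    Submodule.disjoint_def.mpr fun x hx hx' => hI x hx (hx' x hx)
  have hnondeg : (b.restrict I).Nondegenerate :=
    b.nondegenerate_restrict_of_disjoint_orthogonal hb hdisj
  refine ⟨hdisj, codisjoint_iff.mpr (eq_top_iff.mpr fun x _ => ?_)⟩
  let y : I := ((b.restrict I).toDual hnondeg).symm ((b x).domRestrict I)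
  have hy : ∀ z : I, b y z = b x z := fun z =>
    LinearMap.BilinForm.apply_toDual_symm_apply (B := b.restrict I) (hB := hnondeg) _ z
  refine Submodule.mem_sup.mpr ⟨y, y.2, x - y, fun z hz => hb _ _ ?_, add_sub_cancel _ _⟩
  rw [map_sub, LinearMap.sub_apply, hy ⟨z, hz⟩, sub_self]

theorem iSup_inf_orthogonal_iSup_le [CommRing R] [Module R E]
    {b : LinearMap.BilinForm R E} {V J : ι → Submodule R E} (hJV : ∀ w, J w ≤ V w)
    (hV : ∀ v w, v ≠ w → ∀ x ∈ V v, ∀ y ∈ V w, b x y = 0) :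
    (⨆ w, V w) ⊓ b.orthogonal (⨆ w, J w) ≤ ⨆ w, V w ⊓ b.orthogonal (⨆ w, J w) := by
  rintro x ⟨hxV, hxJ⟩
  obtain ⟨c, hc, rfl⟩ := (Submodule.mem_iSup_iff_exists_finsupp V x).mp hxV
  refine Submodule.sum_mem _ fun w _ => Submodule.mem_iSup_of_mem w ⟨hc w, ?_⟩
  suffices hle : ⨆ v, J v ≤ LinearMap.ker (LinearMap.flip b (c w)) from fun y hy => hle hy
  refine iSup_le fun v y hy => ?_
  rw [LinearMap.mem_ker, LinearMap.flip_apply]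
  rcases eq_or_ne v w with rfl | hvw
  · have htotal := hxJ y (Submodule.mem_iSup_of_mem v hy)
    rw [Finsupp.sum, map_sum] at htotal
    rw [← htotal, eq_comm]
    refine Finset.sum_eq_single v (fun u _ huv => ?_) fun hv => ?_
    · exact hV v u huv.symm y (hJV v hy) _ (hc u)
    · rw [Finsupp.notMem_support_iff.mp hv, map_zero]
  · exact hV v w hvw y (hJV v hy) _ (hc w)

end Orthogonal

section Cochains

variable {m : Submodule ℝ L} {πm : L →ₗ[ℝ] L} {hπ : ∀ z, πm z ∈ m}

/-- The linear map underlying a linear 1-cochain. -/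
def IsLin7.toLinearMap {φ : m → L} (h : IsLin7 m φ) : m →ₗ[ℝ] L where
  toFun := φ
  map_add' := h.1
  map_smul' := h.2

/-- The bilinear map underlying an alternating 2-cochain. -/
def IsAlt7.toLinearMap₂ {ψ : m → m → L} (h : IsAlt7 m ψ) : m →ₗ[ℝ] m →ₗ[ℝ] L :=
  LinearMap.mk₂ ℝ ψ (fun x x' y => (h.1 y).1 x x') (fun c x y => (h.1 y).2 c x)
    (fun x => (h.2.1 x).1) (fun c x y => (h.2.1 x).2 c y)

theorem IsAlt7.isAlt_toLinearMap₂ {ψ : m → m → L} (h : IsAlt7 m ψ) : h.toLinearMap₂.IsAlt :=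
  h.2.2

theorem isLin7_coe (Φ : m →ₗ[ℝ] L) : IsLin7 m Φ :=
  ⟨map_add Φ, map_smul Φ⟩

theorem isAlt7_coe {Ψ : m →ₗ[ℝ] m →ₗ[ℝ] L} (h : Ψ.IsAlt) : IsAlt7 m fun x y => Ψ x y :=
  ⟨fun y => isLin7_coe (LinearMap.flip Ψ y), fun x => isLin7_coe (Ψ x), h⟩

/-- The linear 1-cochains that are homogeneous of weight `w`. -/
def homogLin (g : ℤ → Submodule ℝ L) (m : Submodule ℝ L) (w : ℤ) : Submodule ℝ (m → L) where
  carrier := {φ | IsLin7 m φ ∧ Homog17 g m w φ}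
  zero_mem' := ⟨isLin7_coe 0, fun _ _ _ _ => zero_mem _⟩
  add_mem' := fun ⟨h, hw⟩ ⟨h', hw'⟩ => ⟨isLin7_coe (h.toLinearMap + h'.toLinearMap),
    fun p hp x hx => add_mem (hw p hp x hx) (hw' p hp x hx)⟩
  smul_mem' := fun c _ ⟨h, hw⟩ => ⟨isLin7_coe (c • h.toLinearMap),
    fun p hp x hx => Submodule.smul_mem _ c (hw p hp x hx)⟩

/-- The space `C²(m,g)` of all alternating 2-cochains. -/
def altCochains (m : Submodule ℝ L) : Submodule ℝ (m → m → L) where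
  carrier := {ψ | IsAlt7 m ψ}
  zero_mem' := isAlt7_coe (Ψ := 0) fun _ => rfl
  add_mem' := fun h h' => isAlt7_coe (Ψ := h.toLinearMap₂ + h'.toLinearMap₂) fun x => by
    simp [h.isAlt_toLinearMap₂ x, h'.isAlt_toLinearMap₂ x]
  smul_mem' := fun c _ h => isAlt7_coe (Ψ := c • h.toLinearMap₂) fun x => by
    simp [h.isAlt_toLinearMap₂ x]

/-- The alternating 2-cochains that are homogeneous of weight `w`. -/
def homogAlt (g : ℤ → Submodule ℝ L) (m : Submodule ℝ L) (w : ℤ) : Submodule ℝ (m → m → L) where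
  carrier := {ψ | ψ ∈ altCochains m ∧ Homog27 g m w ψ}
  zero_mem' := ⟨zero_mem _, fun _ _ _ _ _ _ _ _ => zero_mem _⟩
  add_mem' := fun ⟨h, hw⟩ ⟨h', hw'⟩ => ⟨add_mem h h',
    fun p q hp hq x y hx hy => add_mem (hw p q hp hq x y hx hy) (hw' p q hp hq x y hx hy)⟩
  smul_mem' := fun c _ ⟨h, hw⟩ => ⟨Submodule.smul_mem _ c h,
    fun p q hp hq x y hx hy => Submodule.smul_mem _ c (hw p q hp hq x y hx hy)⟩

instance [FiniteDimensional ℝ L] : FiniteDimensional ℝ (altCochains m) := by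
  let F : (m →ₗ[ℝ] m →ₗ[ℝ] L) →ₗ[ℝ] (m → m → L) :=
    { toFun := fun Ψ x y => Ψ x y
      map_add' := fun _ _ => rfl
      map_smul' := fun _ _ => rfl }
  have hle : altCochains m ≤ LinearMap.range F := fun _ hψ => ⟨hψ.toLinearMap₂, rfl⟩
  exact Submodule.finiteDimensional_of_le hle

/-- The map `x ↦ π_m [A, x]` on `m`, linear in `A`. -/
def adProj (πm : L →ₗ[ℝ] L) (hπ : ∀ z, πm z ∈ m) : L →ₗ[ℝ] m →ₗ[ℝ] m :=
  let bracket : L →ₗ[ℝ] L →ₗ[ℝ] L := (LieAlgebra.ad ℝ L : L →ₗ[ℝ] Module.End ℝ L)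
  (bracket.compl₂ m.subtype).compr₂ (πm.codRestrict m hπ)

theorem act27_apply (A : L) (ψ : m → m → L) (x y : m) : act27 m πm hπ A ψ x y =
    ⁅A, ψ x y⁆ - ψ (adProj πm hπ A x) y - ψ x (adProj πm hπ A y) :=
  rfl

theorem cobound7_apply (φ : m → L) (x y : m) : cobound7 m πm hπ φ x y =
    ⁅(x : L), φ y⁆ - ⁅(y : L), φ x⁆ + φ (adProj πm hπ (x : L) y) :=
  rfl

/-- The action `(A·φ)(x) = [A, φ x] - φ (π_m [A, x])` of `A` on 1-cochains. -/
def actOne (πm : L →ₗ[ℝ] L) (hπ : ∀ z, πm z ∈ m) (A : L) (φ : m → L) : m → L :=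
  fun x => ⁅A, φ x⁆ - φ (adProj πm hπ A x)

theorem IsLin7.actOne {φ : m → L} (h : IsLin7 m φ) (A : L) : IsLin7 m (actOne πm hπ A φ) :=
  isLin7_coe (LieAlgebra.ad ℝ L A ∘ₗ h.toLinearMap - h.toLinearMap ∘ₗ adProj πm hπ A)

theorem IsAlt7.act27 {ψ : m → m → L} (h : IsAlt7 m ψ) (A : L) : IsAlt7 m (act27 m πm hπ A ψ) :=
  isAlt7_coe (Ψ := h.toLinearMap₂.compr₂ (LieAlgebra.ad ℝ L A) -
    h.toLinearMap₂ ∘ₗ adProj πm hπ A - h.toLinearMap₂.compl₂ (adProj πm hπ A)) fun x => by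
      have hswap := h.isAlt_toLinearMap₂.neg x (adProj πm hπ A x)
      simp [h.isAlt_toLinearMap₂ x, ← hswap]

theorem IsLin7.cobound7 {φ : m → L} (h : IsLin7 m φ) : IsAlt7 m (cobound7 m πm hπ φ) := by
  let bracket : L →ₗ[ℝ] L →ₗ[ℝ] L := (LieAlgebra.ad ℝ L : L →ₗ[ℝ] Module.End ℝ L)
  let D : m →ₗ[ℝ] m →ₗ[ℝ] L := bracket.compl₁₂ m.subtype h.toLinearMap
  refine isAlt7_coe (Ψ := D - LinearMap.flip D +
    (adProj πm hπ ∘ₗ m.subtype).compr₂ h.toLinearMap) fun x => ?_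
  have hself : adProj πm hπ (x : L) x = 0 := Subtype.ext (by simp [adProj])
  simp [hself]

/-- The coboundary `∂`, as a linear map on arbitrary functions. -/
def coboundLinear (m : Submodule ℝ L) (πm : L →ₗ[ℝ] L) (hπ : ∀ z, πm z ∈ m) :
    (m → L) →ₗ[ℝ] (m → m → L) where
  toFun := cobound7 m πm hπ
  map_add' φ φ' := by
    funext x y
    simp only [cobound7, Pi.add_apply, lie_add]
    abel
  map_smul' c φ := by
    funext x y
    simp only [cobound7, Pi.smul_apply, lie_smul, smul_add, smul_sub, RingHom.id_apply]

/-- The action `ψ ↦ A·ψ` of a fixed `A`, as a linear map on arbitrary functions. -/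
def actLinear (πm : L →ₗ[ℝ] L) (hπ : ∀ z, πm z ∈ m) (A : L) :
    (m → m → L) →ₗ[ℝ] (m → m → L) where
  toFun := act27 m πm hπ A
  map_add' ψ ψ' := by
    funext x y
    simp only [act27_apply, Pi.add_apply, lie_add]
    abel
  map_smul' c ψ := by
    funext x y
    simp only [act27_apply, Pi.smul_apply, lie_smul, smul_sub, RingHom.id_apply]

theorem IsAlt7.act27_apply {ψ : m → m → L} (h : IsAlt7 m ψ) (A : L) (x y : m) :
    _root_.act27 m πm hπ A ψ x y = ⁅A, h.toLinearMap₂ x y⁆ -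
      h.toLinearMap₂ (adProj πm hπ A x) y - h.toLinearMap₂ x (adProj πm hπ A y) :=
  rfl

/-- The orbit map `A ↦ A·ψ` of an alternating 2-cochain `ψ`, as a linear map. -/
def IsAlt7.orbitLinear (πm : L →ₗ[ℝ] L) (hπ : ∀ z, πm z ∈ m) {ψ : m → m → L} (h : IsAlt7 m ψ) :
    L →ₗ[ℝ] (m → m → L) where
  toFun A := _root_.act27 m πm hπ A ψ
  map_add' A A' := by
    funext x y
    simp only [h.act27_apply, Pi.add_apply, map_add, add_lie, LinearMap.add_apply]
    abel
  map_smul' c A := by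
    funext x y
    simp only [h.act27_apply, Pi.smul_apply, map_smul, smul_lie, LinearMap.smul_apply, smul_sub,
      RingHom.id_apply]

theorem act27_cobound7 {φ : m → L} (hφ : IsLin7 m φ) {Z : L} (hZ : ∀ x ∈ m, ⁅Z, x⁆ ∈ m)
    (hm : ∀ x ∈ m, ∀ y ∈ m, ⁅x, y⁆ ∈ m) (hπm : ∀ x ∈ m, πm x = x) :
    act27 m πm hπ Z (cobound7 m πm hπ φ) = cobound7 m πm hπ (actOne πm hπ Z φ) := by
  have hadZ : ∀ x : m, (adProj πm hπ Z x : L) = ⁅Z, (x : L)⁆ := fun x => hπm _ (hZ x x.2)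
  have hadm : ∀ x y : m, (adProj πm hπ (x : L) y : L) = ⁅(x : L), (y : L)⁆ := fun x y =>
    hπm _ (hm x x.2 y y.2)
  funext x y
  have hderiv : adProj πm hπ Z (adProj πm hπ (x : L) y) =
      adProj πm hπ (adProj πm hπ Z x : L) y + adProj πm hπ (x : L) (adProj πm hπ Z y) :=
    Subtype.ext <| by
      rw [Submodule.coe_add, hadZ, hadm, hadm, hadm, hadZ, hadZ, leibniz_lie]
  simp only [act27_apply, cobound7_apply, actOne, hderiv, hφ.1, hadZ, lie_add, lie_sub,
    leibniz_lie Z (x : L), leibniz_lie Z (y : L)]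
  abel

variable {g : ℤ → Submodule ℝ L}

theorem C1plus7_eq_iSup : C1plus7 g m = ⨆ w : {w : ℤ // 0 < w}, homogLin g m w := by
  rw [Submodule.iSup_eq_span, C1plus7]
  congr 1
  ext φ
  simp only [Set.mem_ofPred_eq, Set.mem_iUnion, Subtype.exists, exists_prop]
  exact ⟨fun ⟨h, w, hw, hφ⟩ => ⟨w, hw, h, hφ⟩, fun ⟨w, hw, h, hφ⟩ => ⟨h, w, hw, hφ⟩⟩

theorem C2plus7_eq_iSup : C2plus7 g m = ⨆ w : {w : ℤ // 0 < w}, homogAlt g m w := by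
  rw [Submodule.iSup_eq_span, C2plus7]
  congr 1
  ext ψ
  simp only [Set.mem_ofPred_eq, Set.mem_iUnion, Subtype.exists, exists_prop]
  exact ⟨fun ⟨h, w, hw, hψ⟩ => ⟨w, hw, h, hψ⟩, fun ⟨w, hw, h, hψ⟩ => ⟨h, w, hw, hψ⟩⟩

theorem imDel7_eq_iSup : imDel7 g m πm hπ =
    ⨆ w : {w : ℤ // 0 < w}, (homogLin g m w).map (coboundLinear m πm hπ) := by
  rw [← Submodule.map_iSup, ← C1plus7_eq_iSup]
  exact Submodule.span_eq ((C1plus7 g m).map (coboundLinear m πm hπ))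

theorem C2plus7_le_altCochains : C2plus7 g m ≤ altCochains m :=
  C2plus7_eq_iSup.trans_le (iSup_le fun _ _ hψ => hψ.1)

end Cochains

section Grading

variable {g : ℤ → Submodule ℝ L} {m : Submodule ℝ L} {πm : L →ₗ[ℝ] L} {hπ : ∀ z, πm z ∈ m}

/-- `m` is the negative part of the grading `g`, and `πm` is the projection onto `m` that kills
the non-negative part. -/
structure IsNegativeProjection (g : ℤ → Submodule ℝ L) (m : Submodule ℝ L)
    (πm : L →ₗ[ℝ] L) : Prop where
  eq_iSup : m = ⨆ p ∈ {p : ℤ | p < 0}, g p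
  apply_of_mem : ∀ x ∈ m, πm x = x
  apply_of_nonneg : ∀ p, 0 ≤ p → ∀ x ∈ g p, πm x = 0

namespace IsNegativeProjection

variable (h : IsNegativeProjection g m πm) {p : ℤ} {x y : L}
include h

theorem le_of_neg (hp : p < 0) : g p ≤ m :=
  h.eq_iSup ▸ le_iSup₂_of_le p hp le_rfl

theorem apply_mem (hx : x ∈ g p) : πm x ∈ g p := by
  rcases lt_or_ge p 0 with hp | hp
  · rwa [h.apply_of_mem x (h.le_of_neg hp hx)]
  · rw [h.apply_of_nonneg p hp x hx]
    exact zero_mem _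

theorem eq_zero_of_nonneg (hxm : x ∈ m) (hp : 0 ≤ p) (hx : x ∈ g p) : x = 0 :=
  (h.apply_of_mem x hxm).symm.trans (h.apply_of_nonneg p hp x hx)

theorem bilin_apply_left {B : LinearMap.BilinForm ℝ L} (hg : ⨆ p, g p = ⊤)
    (hB : ∀ p q, p ≠ q → ∀ x ∈ g p, ∀ y ∈ g q, B x y = 0) (z : L) (hy : y ∈ m) :
    B (πm z) y = B z y := by
  suffices hle : ⨆ p, g p ≤ LinearMap.eqLocus (LinearMap.flip B y ∘ₗ πm) (LinearMap.flip B y) from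
    hle (hg ▸ Submodule.mem_top)
  refine iSup_le fun q z hz => ?_
  change B (πm z) y = B z y
  rcases lt_or_ge q 0 with hq | hq
  · rw [h.apply_of_mem z (h.le_of_neg hq hz)]
  · have hle : m ≤ LinearMap.ker (B z) :=
      h.eq_iSup.trans_le <| iSup₂_le fun p hp x hx => hB q p (lt_of_lt_of_le hp hq).ne' z hz x hx
    rw [h.apply_of_nonneg q hq z hz, map_zero, LinearMap.zero_apply, show B z y = 0 from hle hy]

end IsNegativeProjection

theorem homogLin_apply_mem (h : IsNegativeProjection g m πm) {w p r : ℤ} {φ : m → L}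
    (hφ : φ ∈ homogLin g m w) {x : m} (hx : (x : L) ∈ g p) (hr : p + w = r) : φ x ∈ g r := by
  rcases lt_or_ge p 0 with hp | hp
  · exact hr ▸ hφ.2 p hp x hx
  · obtain rfl : x = 0 := Subtype.ext (h.eq_zero_of_nonneg x.2 hp hx)
    rw [show φ 0 = 0 from map_zero hφ.1.toLinearMap]
    exact zero_mem _

theorem homogAlt_apply_mem (h : IsNegativeProjection g m πm) {w p q r : ℤ} {ψ : m → m → L}
    (hψ : ψ ∈ homogAlt g m w) {x y : m} (hx : (x : L) ∈ g p) (hy : (y : L) ∈ g q)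
    (hr : p + q + w = r) : ψ x y ∈ g r := by
  have hΨ : ψ x y = hψ.1.toLinearMap₂ x y := rfl
  rcases lt_or_ge p 0 with hp | hp
  · rcases lt_or_ge q 0 with hq | hq
    · exact hr ▸ hψ.2 p q hp hq x y hx hy
    · obtain rfl : y = 0 := Subtype.ext (h.eq_zero_of_nonneg y.2 hq hy)
      rw [hΨ, map_zero]
      exact zero_mem _
  · obtain rfl : x = 0 := Subtype.ext (h.eq_zero_of_nonneg x.2 hp hx)
    rw [hΨ, map_zero, LinearMap.zero_apply]
    exact zero_mem _

variable [SetLike.GradedBracket g]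

theorem lie_mem_of_add_eq {p q r : ℤ} {x y : L} (hx : x ∈ g p) (hy : y ∈ g q) (hr : p + q = r) :
    ⁅x, y⁆ ∈ g r :=
  hr ▸ SetLike.GradedBracket.bracket_mem hx hy

theorem IsNegativeProjection.lie_mem (h : IsNegativeProjection g m πm) {r : ℤ} (hr : r ≤ 0)
    {Z : L} (hZ : Z ∈ g r) {x : L} (hx : x ∈ m) : ⁅Z, x⁆ ∈ m := by
  suffices hle : m ≤ m.comap (LieAlgebra.ad ℝ L Z) from hle hx
  exact h.eq_iSup.trans_le <| iSup₂_le fun p hp y hy =>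
    h.le_of_neg (add_neg_of_nonpos_of_neg hr hp) (lie_mem_of_add_eq hZ hy rfl)

theorem IsNegativeProjection.lie_mem_of_mem (h : IsNegativeProjection g m πm) {x y : L}
    (hx : x ∈ m) (hy : y ∈ m) : ⁅x, y⁆ ∈ m := by
  suffices hle : m ≤ m.comap (LieAlgebra.ad ℝ L y) by
    rw [← lie_skew]
    exact neg_mem (hle hx)
  refine h.eq_iSup.trans_le <| iSup₂_le fun p hp z hz => ?_
  rw [Submodule.mem_comap, LieAlgebra.ad_apply, ← lie_skew]
  exact neg_mem (h.lie_mem (le_of_lt hp) hz hy)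

theorem adProj_mem (h : IsNegativeProjection g m πm) {p q r : ℤ} {A : L} (hA : A ∈ g r) {x : m}
    (hx : (x : L) ∈ g p) (hq : r + p = q) : (adProj πm hπ A x : L) ∈ g q :=
  h.apply_mem (lie_mem_of_add_eq hA hx hq)

theorem cobound7_mem_homogAlt (h : IsNegativeProjection g m πm) {w : ℤ} {φ : m → L}
    (hφ : φ ∈ homogLin g m w) : cobound7 m πm hπ φ ∈ homogAlt g m w := by
  refine ⟨hφ.1.cobound7, fun p q _ _ x y hx hy => add_mem (sub_mem ?_ ?_) ?_⟩
  · exact lie_mem_of_add_eq hx (homogLin_apply_mem h hφ hy rfl) (by ring)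
  · exact lie_mem_of_add_eq hy (homogLin_apply_mem h hφ hx rfl) (by ring)
  · exact homogLin_apply_mem h hφ (adProj_mem (hπ := hπ) h hx hy rfl) rfl

theorem actOne_mem_homogLin (h : IsNegativeProjection g m πm) {w r : ℤ} {A : L} (hA : A ∈ g r)
    {φ : m → L} (hφ : φ ∈ homogLin g m w) : actOne πm hπ A φ ∈ homogLin g m (w + r) := by
  refine ⟨hφ.1.actOne A, fun p _ x hx => sub_mem ?_ ?_⟩
  · exact lie_mem_of_add_eq hA (homogLin_apply_mem h hφ hx rfl) (by ring)
  · exact homogLin_apply_mem h hφ (adProj_mem h hA hx rfl) (by ring)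

theorem act27_mem_homogAlt (h : IsNegativeProjection g m πm) {w r : ℤ} {A : L} (hA : A ∈ g r)
    {ψ : m → m → L} (hψ : ψ ∈ homogAlt g m w) : act27 m πm hπ A ψ ∈ homogAlt g m (w + r) := by
  refine ⟨hψ.1.act27 A, fun p q _ _ x y hx hy => sub_mem (sub_mem ?_ ?_) ?_⟩
  · exact lie_mem_of_add_eq hA (homogAlt_apply_mem h hψ hx hy rfl) (by ring)
  · exact homogAlt_apply_mem h hψ (adProj_mem (hπ := hπ) h hA hx rfl) hy (by ring)
  · exact homogAlt_apply_mem h hψ hx (adProj_mem (hπ := hπ) h hA hy rfl) (by ring)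

theorem act27_mem_C2plus7 (h : IsNegativeProjection g m πm) {r : ℤ} (hr : 0 ≤ r) {A : L}
    (hA : A ∈ g r) {ψ : m → m → L} (hψ : ψ ∈ C2plus7 g m) : act27 m πm hπ A ψ ∈ C2plus7 g m := by
  suffices hle : C2plus7 g m ≤ (C2plus7 g m).comap (actLinear πm hπ A) from hle hψ
  refine Submodule.span_le.mpr ?_
  rintro χ ⟨hχ, w, hw, hχw⟩
  have hmem := act27_mem_homogAlt (hπ := hπ) h hA ⟨hχ, hχw⟩
  exact Submodule.subset_span ⟨hmem.1, w + r, add_pos_of_pos_of_nonneg hw hr, hmem.2⟩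

theorem imDel7_le_C2plus7 (h : IsNegativeProjection g m πm) :
    imDel7 g m πm hπ ≤ C2plus7 g m := by
  rw [imDel7_eq_iSup, C2plus7_eq_iSup]
  exact iSup_mono fun w => Submodule.map_le_iff_le_comap.mpr fun _ => cobound7_mem_homogAlt h

end Grading

section CochainForm

variable {R X V ι : Type*} [Fintype ι] [CommSemiring R] [AddCommMonoid V] [Module R V]

/-- The bilinear form `(ψ, ψ') ↦ ∑ i j, B (ψ fᵢ fⱼ) (ψ' fᵢ fⱼ)` on 2-cochains. For a Parseval
frame `f` it plays the role of the inner product that `B` induces on bilinear maps. -/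
def cochainForm (B : LinearMap.BilinForm R V) (f : ι → X) :
    LinearMap.BilinForm R (X → X → V) :=
  let eval (i j : ι) : (X → X → V) →ₗ[R] V := LinearMap.proj (f j) ∘ₗ LinearMap.proj (f i)
  ∑ i, ∑ j, B.comp (eval i j) (eval i j)

theorem cochainForm_apply (B : LinearMap.BilinForm R V) (f : ι → X) (ψ ψ' : X → X → V) :
    cochainForm B f ψ ψ' = ∑ i, ∑ j, B (ψ (f i) (f j)) (ψ' (f i) (f j)) := by
  simp [cochainForm, LinearMap.sum_apply]

theorem isSymm_cochainForm {B : LinearMap.BilinForm R V} (hB : B.IsSymm) (f : ι → X) :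
    (cochainForm B f).IsSymm :=
  ⟨fun ψ ψ' => by simp only [cochainForm_apply, hB.eq (ψ _ _)]⟩

theorem eq_zero_of_cochainForm_self_eq_zero [PartialOrder R] [IsOrderedAddMonoid R]
    [AddCommMonoid X] [Module R X] {B : LinearMap.BilinForm R V} (hB : ∀ x, x ≠ 0 → 0 < B x x)
    {C : LinearMap.BilinForm R X} {f : ι → X} (hf : IsParsevalFrame C f) {Ψ : X →ₗ[R] X →ₗ[R] V}
    (hΨ : cochainForm B f (fun x y => Ψ x y) (fun x y => Ψ x y) = 0) : Ψ = 0 := by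
  have hnonneg : ∀ x, 0 ≤ B x x := fun x => by
    rcases eq_or_ne x 0 with rfl | hx
    · rw [map_zero]
    · exact (hB x hx).le
  refine hf.linearMap_ext fun i => hf.linearMap_ext fun j => ?_
  rw [cochainForm_apply, Fintype.sum_eq_zero_iff_of_nonneg fun _ =>
    Finset.sum_nonneg fun _ _ => hnonneg _] at hΨ
  have hij := congrFun ((Fintype.sum_eq_zero_iff_of_nonneg fun _ => hnonneg _).mp
    (congrFun hΨ i)) j
  exact not_imp_not.mp (fun hne => (hB _ hne).ne') hij

end CochainForm

section Normalization

variable {g : ℤ → Submodule ℝ L} {m : Submodule ℝ L} {πm : L →ₗ[ℝ] L} {hπ : ∀ z, πm z ∈ m}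
  {B : LinearMap.BilinForm ℝ L} {ι : Type*} [Fintype ι] {f : ι → m} {d : ι → ℤ}

theorem cochainForm_act27 (hB : B.IsSymm) (hf : IsParsevalFrame (B.restrict m) f) {A A' : L}
    (hA : LinearMap.IsAdjointPair B B (⁅A, ·⁆) (⁅A', ·⁆))
    (hAm : LinearMap.IsAdjointPair (B.restrict m) (B.restrict m) (adProj πm hπ A)
      (adProj πm hπ A')) {ψ ψ' : m → m → L} (hψ : IsAlt7 m ψ) (hψ' : IsAlt7 m ψ') :
    cochainForm B f (act27 m πm hπ A ψ) ψ' = cochainForm B f ψ (act27 m πm hπ A' ψ') := by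
  have hBm : (B.restrict m).IsSymm := ⟨fun x y => hB.eq x y⟩
  have htrace (G : LinearMap.BilinForm ℝ m) := hf.sum_apply_eq_of_isAdjointPair hBm hAm G
  have hfst : ∑ i, ∑ j, B (ψ (adProj πm hπ A (f i)) (f j)) (ψ' (f i) (f j)) =
      ∑ i, ∑ j, B (ψ (f i) (f j)) (ψ' (adProj πm hπ A' (f i)) (f j)) := by
    rw [Finset.sum_comm, Finset.sum_comm (s := Finset.univ (α := ι)) (f := fun i j =>
      B (ψ (f i) (f j)) (ψ' (adProj πm hπ A' (f i)) (f j)))]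
    exact Finset.sum_congr rfl fun j _ => htrace <|
      B.compl₁₂ (LinearMap.flip hψ.toLinearMap₂ (f j)) (LinearMap.flip hψ'.toLinearMap₂ (f j))
  have hsnd : ∑ i, ∑ j, B (ψ (f i) (adProj πm hπ A (f j))) (ψ' (f i) (f j)) =
      ∑ i, ∑ j, B (ψ (f i) (f j)) (ψ' (f i) (adProj πm hπ A' (f j))) :=
    Finset.sum_congr rfl fun i _ => htrace <|
      B.compl₁₂ (hψ.toLinearMap₂ (f i)) (hψ'.toLinearMap₂ (f i))
  simp only [cochainForm_apply, act27_apply, map_sub, LinearMap.sub_apply,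
    Finset.sum_sub_distrib, hA _ _, hfst, hsnd]

theorem IsNegativeProjection.isAdjointPair_adProj (h : IsNegativeProjection g m πm)
    (hg : ⨆ p, g p = ⊤) (hB : B.IsSymm)
    (hBorth : ∀ p q, p ≠ q → ∀ x ∈ g p, ∀ y ∈ g q, B x y = 0) {A A' : L}
    (hA : LinearMap.IsAdjointPair B B (⁅A, ·⁆) (⁅A', ·⁆)) :
    LinearMap.IsAdjointPair (B.restrict m) (B.restrict m) (adProj πm hπ A) (adProj πm hπ A') :=
  fun x y => calc
    B (πm ⁅A, (x : L)⁆) y = B ⁅A, (x : L)⁆ y := h.bilin_apply_left hg hBorth _ y.2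
    _ = B x ⁅A', (y : L)⁆ := hA x y
    _ = B (πm ⁅A', (y : L)⁆) x := by rw [h.bilin_apply_left hg hBorth _ x.2, hB.eq]
    _ = B x (πm ⁅A', (y : L)⁆) := hB.eq _ _

/-- The normalization condition of Morimoto's criterion: the 2-cochains of positive weight that are
orthogonal to `∂(C¹₊(m,g))` for `cochainForm B f`. -/
def normalization (g : ℤ → Submodule ℝ L) (m : Submodule ℝ L) (πm : L →ₗ[ℝ] L)
    (hπ : ∀ z, πm z ∈ m) (B : LinearMap.BilinForm ℝ L) (f : ι → m) :
    Submodule ℝ (m → m → L) :=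
  C2plus7 g m ⊓ (cochainForm B f).orthogonal (imDel7 g m πm hπ)

/-- The span of the homogeneous `A ∈ g` of non-negative degree for which `[A, ·]` has an adjoint of
the form `[A', ·]` with `A'` homogeneous of the opposite degree. It contains every graded `k` to
which the criterion applies. -/
def gradedAdjointable (g : ℤ → Submodule ℝ L) (B : LinearMap.BilinForm ℝ L) : Submodule ℝ L :=
  Submodule.span ℝ {A | ∃ p, 0 ≤ p ∧ A ∈ g p ∧
    ∃ A' ∈ g (-p), LinearMap.IsAdjointPair B B (⁅A, ·⁆) (⁅A', ·⁆)}

section HomogeneousFrame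

variable (h : IsNegativeProjection g m πm)
  (hBorth : ∀ p q, p ≠ q → ∀ x ∈ g p, ∀ y ∈ g q, B x y = 0)
  (hfd : ∀ i, (f i : L) ∈ g (d i))
include h hBorth hfd

theorem cochainForm_eq_zero_of_weight_ne {w w' : ℤ} (hw : w ≠ w') {ψ ψ' : m → m → L}
    (hψ : ψ ∈ homogAlt g m w) (hψ' : ψ' ∈ homogAlt g m w') : cochainForm B f ψ ψ' = 0 := by
  rw [cochainForm_apply]
  refine Finset.sum_eq_zero fun i _ => Finset.sum_eq_zero fun j _ => ?_
  exact hBorth (d i + d j + w) (d i + d j + w') (fun heq => hw (add_left_cancel heq))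
    _ (homogAlt_apply_mem h hψ (hfd i) (hfd j) rfl)
    _ (homogAlt_apply_mem h hψ' (hfd i) (hfd j) rfl)

variable [SetLike.GradedBracket g]

theorem normalization_eq_iSup :
    normalization g m πm hπ B f =
      ⨆ w : {w : ℤ // 0 < w}, homogAlt g m w ⊓ normalization g m πm hπ B f := by
  refine le_antisymm ?_ (iSup_le fun w => inf_le_right)
  have hle := iSup_inf_orthogonal_iSup_le (b := cochainForm B f)
    (V := fun w : {w : ℤ // 0 < w} => homogAlt g m w)
    (J := fun w : {w : ℤ // 0 < w} => (homogLin g m w).map (coboundLinear m πm hπ))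
    (fun w => Submodule.map_le_iff_le_comap.mpr fun _ => cobound7_mem_homogAlt h)
    fun v w hvw ψ hψ ψ' hψ' =>
      cochainForm_eq_zero_of_weight_ne h hBorth hfd (Subtype.coe_injective.ne hvw) hψ hψ'
  rw [← C2plus7_eq_iSup, ← imDel7_eq_iSup] at hle
  refine hle.trans (iSup_mono fun w => le_inf inf_le_left (inf_le_inf_right _ ?_))
  rw [C2plus7_eq_iSup]
  exact le_iSup (fun w : {w : ℤ // 0 < w} => homogAlt g m w) w

theorem normalization_eq_span_homogeneous :
    normalization g m πm hπ B f = Submodule.span ℝ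
      {ψ | ψ ∈ normalization g m πm hπ B f ∧ ∃ w : ℤ, Homog27 g m w ψ} := by
  refine le_antisymm ?_ (Submodule.span_le.mpr fun ψ hψ => hψ.1)
  refine (normalization_eq_iSup h hBorth hfd).trans_le (iSup_le fun w ψ hψ => ?_)
  exact Submodule.subset_span ⟨hψ.2, w, hψ.1.2⟩

theorem cochainForm_cobound7_of_mem_normalization {ψ : m → m → L}
    (hψ : ψ ∈ normalization g m πm hπ B f) {w : ℤ} {φ : m → L} (hφ : φ ∈ homogLin g m w) :
    cochainForm B f (cobound7 m πm hπ φ) ψ = 0 := by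
  rcases lt_or_ge 0 w with hw | hw
  · refine hψ.2 _ ?_
    rw [imDel7_eq_iSup]
    exact Submodule.mem_iSup_of_mem ⟨w, hw⟩ (Submodule.mem_map_of_mem hφ)
  · suffices hle : C2plus7 g m ≤ LinearMap.ker (cochainForm B f (cobound7 m πm hπ φ)) from hle hψ.1
    rw [C2plus7_eq_iSup]
    exact iSup_le fun v χ hχ => cochainForm_eq_zero_of_weight_ne h hBorth hfd
      (lt_of_le_of_lt hw v.2).ne (cobound7_mem_homogAlt h hφ) hχ

theorem act27_mem_normalization (hg : ⨆ p, g p = ⊤) (hB : B.IsSymm)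
    (hf : IsParsevalFrame (B.restrict m) f) {A : L} (hA : A ∈ gradedAdjointable g B)
    {ψ : m → m → L} (hψ : ψ ∈ normalization g m πm hπ B f) :
    act27 m πm hπ A ψ ∈ normalization g m πm hπ B f := by
  have hψalt : IsAlt7 m ψ := C2plus7_le_altCochains hψ.1
  suffices hle : gradedAdjointable g B ≤
    (normalization g m πm hπ B f).comap (hψalt.orbitLinear πm hπ) from hle hA
  refine Submodule.span_le.mpr ?_
  rintro A ⟨p, hp, hAp, A', hA'p, hAA'⟩
  refine ⟨act27_mem_C2plus7 (hπ := hπ) h hp hAp hψ.1, ?_⟩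
  suffices hle : imDel7 g m πm hπ ≤
    LinearMap.ker (LinearMap.flip (cochainForm B f) (act27 m πm hπ A ψ)) from fun χ hχ => hle hχ
  rw [imDel7_eq_iSup]
  refine iSup_le fun w => ?_
  rintro _ ⟨φ, hφ, rfl⟩
  have hbSymm := isSymm_cochainForm hB f
  have hnorm : ∀ x ∈ m, ⁅A', x⁆ ∈ m := fun x => h.lie_mem (neg_nonpos.mpr hp) hA'p
  calc cochainForm B f (cobound7 m πm hπ φ) (act27 m πm hπ A ψ)
    _ = cochainForm B f (act27 m πm hπ A ψ) (cobound7 m πm hπ φ) := hbSymm.eq _ _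
    _ = cochainForm B f ψ (act27 m πm hπ A' (cobound7 m πm hπ φ)) :=
        cochainForm_act27 hB hf hAA' (h.isAdjointPair_adProj hg hB hBorth hAA') hψalt hφ.1.cobound7
    _ = cochainForm B f (cobound7 m πm hπ (actOne πm hπ A' φ)) ψ := by
        rw [act27_cobound7 hφ.1 hnorm (fun x hx y hy => h.lie_mem_of_mem hx hy) h.apply_of_mem,
          hbSymm.eq]
    _ = 0 := cochainForm_cobound7_of_mem_normalization h hBorth hfd hψ
        (actOne_mem_homogLin h hA'p hφ)

end HomogeneousFrame

variable [SetLike.GradedBracket g]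

theorem isCompl_imDel7_orthogonal [FiniteDimensional ℝ L]
    (h : IsNegativeProjection g m πm) (hB : B.IsSymm) (hBpos : ∀ x, x ≠ 0 → 0 < B x x)
    (hf : IsParsevalFrame (B.restrict m) f) :
    IsCompl (imDel7 g m πm hπ) ((cochainForm B f).orthogonal (imDel7 g m πm hπ)) := by
  have hle : imDel7 g m πm hπ ≤ altCochains m := (imDel7_le_C2plus7 h).trans C2plus7_le_altCochains
  have := Submodule.finiteDimensional_of_le hle
  refine isCompl_orthogonal_of_anisotropic (isSymm_cochainForm hB f).isRefl fun ψ hψ h0 => ?_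
  have hΨ := eq_zero_of_cochainForm_self_eq_zero hBpos hf (Ψ := (hle hψ).toLinearMap₂) h0
  exact funext₂ fun x y => LinearMap.congr_fun₂ hΨ x y

theorem normalization_sup_imDel7 [FiniteDimensional ℝ L]
    (h : IsNegativeProjection g m πm) (hB : B.IsSymm) (hBpos : ∀ x, x ≠ 0 → 0 < B x x)
    (hf : IsParsevalFrame (B.restrict m) f) :
    normalization g m πm hπ B f ⊔ imDel7 g m πm hπ = C2plus7 g m := by
  rw [normalization, inf_sup_assoc_of_le _ (imDel7_le_C2plus7 h), sup_comm,
    (isCompl_imDel7_orthogonal h hB hBpos hf).sup_eq_top, inf_top_eq]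

end Normalization

theorem morimoto_criterion_general [FiniteDimensional ℝ L] (g : ℤ → Submodule ℝ L)
    (hg : DirectSum.IsInternal g) [SetLike.GradedBracket g] {m : Submodule ℝ L}
    {πm : L →ₗ[ℝ] L} (hπ : ∀ z, πm z ∈ m) (h : IsNegativeProjection g m πm)
    {B : LinearMap.BilinForm ℝ L} (hB : B.IsSymm) (hBpos : ∀ x, x ≠ 0 → 0 < B x x)
    (hBorth : ∀ p q, p ≠ q → ∀ x ∈ g p, ∀ y ∈ g q, B x y = 0) :
    ∃ N : Submodule ℝ (m → m → L),
      N ≤ C2plus7 g m ∧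
      (∀ A ∈ gradedAdjointable g B, ∀ ψ ∈ N, act27 m πm hπ A ψ ∈ N) ∧
      N = Submodule.span ℝ {ψ | ψ ∈ N ∧ ∃ w : ℤ, Homog27 g m w ψ} ∧
      N ⊔ imDel7 g m πm hπ = C2plus7 g m ∧
      Disjoint N (imDel7 g m πm hπ) := by
  obtain rfl : m = ⨆ p : {p : ℤ // p < 0}, g p := h.eq_iSup.trans iSup_subtype'
  have hfin : {p : {p : ℤ // p < 0} | g p ≠ ⊥}.Finite :=
    WellFoundedGT.finite_ne_bot_of_iSupIndep
      (hg.submodule_iSupIndep.comp Subtype.val_injective)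
  obtain ⟨κ, _, f, d, hf, hfd⟩ := exists_isParsevalFrame_restrict_iSup hB hBpos hfin
    fun p q hpq => hBorth p q (Subtype.coe_injective.ne hpq)
  exact ⟨normalization g _ πm hπ B f, inf_le_left,
    fun A hA ψ hψ => act27_mem_normalization h hBorth hfd hg.submodule_iSup_eq_top hB hf hA hψ,
    normalization_eq_span_homogeneous h hBorth hfd, normalization_sup_imDel7 h hB hBpos hf,
    (isCompl_imDel7_orthogonal h hB hBpos hf).disjoint.symm.mono_left inf_le_right⟩

/-- Morimoto's criterion: let `g = ⊕_p g_p` be a finite-dimensional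
ℤ-graded real Lie algebra with negative part `m` and non-negative part `g⁰`
(with projection `π_m : g → m` along `g⁰`), and let `k ⊆ g⁰` be a graded subalgebra.
Suppose there exist a positive definite symmetric bilinear form `(·,·)` on `g` for which
distinct graded components are orthogonal, and a linear map `τ : k → g` with
`τ(k_p) ⊆ g_{-p}` for `p ≥ 0`, such that `([A,x], y) = (x, [τ(A), y])` for all
`x, y ∈ g`, `A ∈ k`.  Then there is a subspace `N ⊆ C²₊(m,g)`, invariant under the
`k`-action and spanned by weight-homogeneous elements, with
`C²₊(m,g) = N ⊕ ∂(C¹₊(m,g))`. -/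
theorem morimoto_criterion
    (L : Type) [LieRing L] [LieAlgebra ℝ L] [FiniteDimensional ℝ L]
    (g : ℤ → Submodule ℝ L) (hinternal : DirectSum.IsInternal g)
    (hbr : ∀ p q : ℤ, ∀ x ∈ g p, ∀ y ∈ g q, ⁅x, y⁆ ∈ g (p + q))
    (m g0 : Submodule ℝ L)
    (hm : m = ⨆ p ∈ {p : ℤ | p < 0}, g p)
    (hg0 : g0 = ⨆ p ∈ {p : ℤ | 0 ≤ p}, g p)
    (πm : L →ₗ[ℝ] L) (hπmem : ∀ z, πm z ∈ m)
    (hπ1 : ∀ x ∈ m, πm x = x) (hπ0 : ∀ x ∈ g0, πm x = 0)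
    (k : Submodule ℝ L) (hk0 : k ≤ g0)
    (hkbr : ∀ x ∈ k, ∀ y ∈ k, ⁅x, y⁆ ∈ k)
    (hkgraded : k = ⨆ p ∈ {p : ℤ | 0 ≤ p}, k ⊓ g p)
    (B : L →ₗ[ℝ] L →ₗ[ℝ] ℝ)
    (hBsymm : ∀ x y, B x y = B y x)
    (hBpos : ∀ x : L, x ≠ 0 → 0 < B x x)
    (hBorth : ∀ p q : ℤ, p ≠ q → ∀ x ∈ g p, ∀ y ∈ g q, B x y = 0)
    (τ : ↥k →ₗ[ℝ] L)
    (hτ : ∀ p : ℤ, 0 ≤ p → ∀ A : ↥k, (A : L) ∈ g p → τ A ∈ g (-p))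
    (hcomp : ∀ (A : ↥k) (x y : L), B ⁅(A : L), x⁆ y = B x ⁅τ A, y⁆) :
    ∃ N : Submodule ℝ (↥m → ↥m → L),
      N ≤ C2plus7 g m ∧
      (∀ A : ↥k, ∀ ψ ∈ N, act27 m πm hπmem (A : L) ψ ∈ N) ∧
      N = Submodule.span ℝ {ψ | ψ ∈ N ∧ ∃ w : ℤ, Homog27 g m w ψ} ∧
      N ⊔ imDel7 g m πm hπmem = C2plus7 g m ∧
      Disjoint N (imDel7 g m πm hπmem) := by
  have : SetLike.GradedBracket g := ⟨fun p q x y hx hy => hbr p q x hx y hy⟩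
  have hproj : IsNegativeProjection g m πm :=
    ⟨hm, hπ1, fun p hp x hx => hπ0 x (hg0 ▸ le_iSup₂ (f := fun p _ => g p) p hp hx)⟩
  have hk : k ≤ gradedAdjointable g B := hkgraded.trans_le <| iSup₂_le fun p hp A hA =>
    Submodule.subset_span ⟨p, hp, hA.2, τ ⟨A, hA.1⟩, hτ p hp ⟨A, hA.1⟩ hA.2, hcomp ⟨A, hA.1⟩⟩
  obtain ⟨N, hN, hact, hrest⟩ :=
    morimoto_criterion_general g hinternal hπmem hproj ⟨hBsymm⟩ hBpos hBorth
  exact ⟨N, hN, fun A => hact A (hk A.2), hrest⟩
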